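/- Proposition 4 (FDMA, unbounded peak power). Consider Problem (P2) in energy variables without the peak power constraints. Let (α₀, α₁, x, s₀, {s_{k,n}}, {m_{k,n}}) be any feasible point with α₁ > 0, and let α₁' satisfy α₁ < α₁' < 1. Then the point obtained by replacing α₁ with α₁' and α₀ with 1 − α₁' > 0, keeping x, s₀, {s_{k,n}}, {m_{k,n}} unchanged, is also feasible, and its sum-rate is greater than or equal to the sum-rate of the original point. Consequently, the supremum of the sum-rate is approached as α₁ → 1 and α₀ → 0. -/

import Mathlib

open Finset

/-- Rate of pair `k` on a subcarrier in Problem (P2) (FDMA, energy variables), over `N`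
subcarriers: WIT time fraction `a₁`, source energy `mkn` (first-hop gain `h1kn`),
relay energy `skn` (second-hop gain `h2kn`), noise power `σ²`; the rate is `0` when
`a₁ = 0`. -/
noncomputable def fdmaRate (N : ℕ) (σ a₁ mkn h1kn skn h2kn : ℝ) : ℝ :=
  if a₁ = 0 then 0
  else (a₁ / (2 * N)) * min (Real.logb 2 (1 + 2 * mkn * h1kn / (a₁ * σ ^ 2)))
                            (Real.logb 2 (1 + 2 * skn * h2kn / (a₁ * σ ^ 2)))

/-!
For `c ≥ 0` the function `a ↦ a * logb 2 (1 + c / a)` is the perspective of the concave function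
`x ↦ logb 2 (1 + x)`, which vanishes at `0`, so it increases with `a`: spreading a fixed energy `c`
over a longer time never loses rate. Minima and nonnegative combinations inherit the monotonicity.
-/

section Perspective

variable {𝕜 E β : Type*} [Field 𝕜] [LinearOrder 𝕜] [IsStrictOrderedRing 𝕜]
  [AddCommMonoid E] [Module 𝕜 E]
  [AddCommMonoid β] [PartialOrder β] [IsOrderedAddMonoid β] [Module 𝕜 β] [PosSMulMono 𝕜 β]

theorem monotoneOn_smul_comp_inv_smul_of_concaveOn {s : Set E} {f : E → β}
    (hf : ConcaveOn 𝕜 s f) (h0 : (0 : E) ∈ s) (hf0 : 0 ≤ f 0) (x : E) :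
    MonotoneOn (fun a : 𝕜 ↦ a • f (a⁻¹ • x)) {a | 0 < a ∧ a⁻¹ • x ∈ s} := by
  rintro a ⟨ha, hxa⟩ b ⟨hb, -⟩ hab
  have hweight : 0 ≤ 1 - a / b := sub_nonneg.2 ((div_le_one hb).2 hab)
  have hmix : (a / b) • a⁻¹ • x + (1 - a / b) • (0 : E) = b⁻¹ • x := by
    rw [smul_zero, add_zero, smul_smul]
    congr 1
    field_simp
  calc a • f (a⁻¹ • x)
      = b • (a / b) • f (a⁻¹ • x) := by rw [smul_smul, mul_div_cancel₀ a hb.ne']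
    _ ≤ b • ((a / b) • f (a⁻¹ • x) + (1 - a / b) • f 0) :=
        smul_le_smul_of_nonneg_left (le_add_of_nonneg_right (smul_nonneg hweight hf0)) hb.le
    _ ≤ b • f ((a / b) • a⁻¹ • x + (1 - a / b) • (0 : E)) :=
        smul_le_smul_of_nonneg_left
          (hf.2 hxa h0 (div_nonneg ha.le hb.le) hweight (add_sub_cancel _ _)) hb.le
    _ = b • f (b⁻¹ • x) := by rw [hmix]

end Perspective

section Logb

variable {b : ℝ}

theorem concaveOn_logb_one_add (hb : 1 < b) :
    ConcaveOn ℝ (Set.Ioi (-1)) fun x ↦ Real.logb b (1 + x) := by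
  have hlog : ConcaveOn ℝ (Set.Ioi (-1)) fun x ↦ Real.log (1 + x) := by
    simpa only [Set.preimage_const_add_Ioi, zero_sub, Function.comp_def] using
      strictConcaveOn_log_Ioi.concaveOn.translate_right 1
  simpa only [Real.logb, div_eq_inv_mul, smul_eq_mul] using
    hlog.smul (inv_nonneg.2 (Real.log_nonneg hb.le))

theorem monotoneOn_mul_logb_one_add_div (hb : 1 < b) {c : ℝ} (hc : 0 ≤ c) :
    MonotoneOn (fun a ↦ a * Real.logb b (1 + c / a)) (Set.Ici 0) := by
  intro a₁ (ha₁ : 0 ≤ a₁) a₂ (ha₂ : 0 ≤ a₂) ha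
  have mem_Ioi : ∀ a : ℝ, 0 ≤ a → a⁻¹ • c ∈ Set.Ioi (-1 : ℝ) := fun a ha ↦
    neg_one_lt_zero.trans_le (mul_nonneg (inv_nonneg.2 ha) hc)
  rcases ha₁.eq_or_lt with rfl | ha₁_pos
  · simp only [zero_mul]
    exact mul_nonneg ha₂ (Real.logb_nonneg hb (le_add_of_nonneg_right (div_nonneg hc ha₂)))
  · have hmono := monotoneOn_smul_comp_inv_smul_of_concaveOn (concaveOn_logb_one_add hb)
      (Set.mem_Ioi.2 neg_one_lt_zero) (by simp only [add_zero, Real.logb_one, le_refl]) c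
      ⟨ha₁_pos, mem_Ioi a₁ ha₁⟩ ⟨ha₁_pos.trans_le ha, mem_Ioi a₂ ha₂⟩ ha
    simpa only [smul_eq_mul, inv_mul_eq_div] using hmono

end Logb

section Rate

variable {N : ℕ} {σ m h₁ s h₂ : ℝ}

theorem fdmaRate_eq_min_mul_logb {a : ℝ} (ha : 0 ≤ a) :
    fdmaRate N σ a m h₁ s h₂ = 1 / (2 * N) *
      min (a * Real.logb 2 (1 + 2 * m * h₁ / σ ^ 2 / a))
        (a * Real.logb 2 (1 + 2 * s * h₂ / σ ^ 2 / a)) := by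
  rcases ha.eq_or_lt with rfl | ha_pos
  · simp only [fdmaRate, if_true, zero_mul, min_self, mul_zero]
  · rw [← mul_min_of_nonneg _ _ ha, fdmaRate, if_neg ha_pos.ne', div_div, div_div,
      mul_comm (σ ^ 2) a]
    ring

theorem monotoneOn_fdmaRate (hm : 0 ≤ m) (hh₁ : 0 ≤ h₁) (hs : 0 ≤ s) (hh₂ : 0 ≤ h₂) :
    MonotoneOn (fun a ↦ fdmaRate N σ a m h₁ s h₂) (Set.Ici 0) := by
  have first_hop := monotoneOn_mul_logb_one_add_div one_lt_two
    (c := 2 * m * h₁ / σ ^ 2) (by positivity)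
  have second_hop := monotoneOn_mul_logb_one_add_div one_lt_two
    (c := 2 * s * h₂ / σ ^ 2) (by positivity)
  intro a₁ ha₁ a₂ ha₂ ha
  simp only [fdmaRate_eq_min_mul_logb ha₁, fdmaRate_eq_min_mul_logb ha₂]
  exact mul_le_mul_of_nonneg_left
    (min_le_min (first_hop ha₁ ha₂ ha) (second_hop ha₁ ha₂ ha)) (by positivity)

end Rate

/-- The weights `x` may be fractional, as when time sharing relaxes the subcarrier assignment. -/
theorem stmt_12_general {ι : Type*} [Fintype ι] {N : ℕ} {σ : ℝ} (_hσ : σ ≠ 0)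
    {h1 h2 x s m : ι → Fin N → ℝ} (hh1 : ∀ k n, 0 ≤ h1 k n) (hh2 : ∀ k n, 0 ≤ h2 k n)
    (hx : ∀ k n, 0 ≤ x k n) (hs : ∀ k n, 0 ≤ s k n) (hm : ∀ k n, 0 ≤ m k n) :
    MonotoneOn
      (fun α₁ ↦ ∑ k, ∑ n, x k n * fdmaRate N σ α₁ (m k n) (h1 k n) (s k n) (h2 k n))
      (Set.Ici 0) := by
  intro α₁ hα₁ α₁' hα₁' hα
  exact sum_le_sum fun k _ ↦ sum_le_sum fun n _ ↦ mul_le_mul_of_nonneg_left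
    (monotoneOn_fdmaRate (hm k n) (hh1 k n) (hs k n) (hh2 k n) hα₁ hα₁' hα) (hx k n)

/-- Proposition 4 (FDMA, unbounded peak power).  For any feasible point of Problem (P2)
without peak power constraints with `α₁ > 0`, and any `α₁ < α₁' < 1`, replacing `α₁` by
`α₁'` and `α₀` by `1 − α₁' > 0` (keeping all other variables) gives a feasible point
whose sum-rate is at least the original sum-rate. -/
theorem stmt_12
    (K N : ℕ) (hK : 1 ≤ K) (hN : 1 ≤ N)
    (σ η P : ℝ) (hσ : 0 < σ) (hη0 : 0 < η) (hη1 : η < 1) (hP : 0 < P)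
    (gr : Fin K → ℝ) (hgr : ∀ k, 0 < gr k)
    (h1 h2 : Fin K → Fin N → ℝ) (hh1 : ∀ k n, 0 < h1 k n) (hh2 : ∀ k n, 0 < h2 k n)
    (Ec : Fin K → ℝ) (hEc : ∀ k, 0 ≤ Ec k)
    -- a feasible point of Problem (P2) (no peak power constraints)
    (α₀ α₁ : ℝ) (x : Fin K → Fin N → ℝ) (s₀ : ℝ) (s m : Fin K → Fin N → ℝ)
    (hα₀nn : 0 ≤ α₀) (hα₁pos : 0 < α₁) (htime : α₀ + α₁ ≤ 1)
    (hx01 : ∀ k n, x k n = 0 ∨ x k n = 1) (hxsum : ∀ n, ∑ k, x k n ≤ 1)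
    (hs₀ : 0 ≤ s₀) (hs : ∀ k n, 0 ≤ s k n)
    (henergy : s₀ + ∑ k, ∑ n, s k n ≤ P)
    (hm : ∀ k n, 0 ≤ m k n)
    (hcaus : ∀ k, (∑ n, m k n) + Ec k ≤ η * s₀ * gr k)
    -- a longer WIT time
    (α₁' : ℝ) (hα₁'gt : α₁ < α₁') (hα₁'lt : α₁' < 1) :
    -- the new point with `α₀` replaced by `1 − α₁'` and `α₁` by `α₁'` is feasible
    0 < 1 - α₁' ∧ (1 - α₁') + α₁' ≤ 1 ∧
    -- the sum-rate does not decrease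
    (∑ k, ∑ n, x k n * fdmaRate N σ α₁ (m k n) (h1 k n) (s k n) (h2 k n)) ≤
      ∑ k, ∑ n, x k n * fdmaRate N σ α₁' (m k n) (h1 k n) (s k n) (h2 k n) := by
  have hx : ∀ k n, 0 ≤ x k n := fun k n ↦
    (hx01 k n).elim Eq.ge fun h ↦ zero_le_one.trans h.ge
  exact ⟨sub_pos.2 hα₁'lt, (sub_add_cancel 1 α₁').le,
    stmt_12_general hσ.ne' (fun k n ↦ (hh1 k n).le) (fun k n ↦ (hh2 k n).le) hx hs hm
      hα₁pos.le (hα₁pos.trans hα₁'gt).le hα₁'gt.le⟩
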